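/- For any pair (μ₀, μ) of finite nonnegative Borel measures, with μ₀ supported in X and μ supported in X × U, satisfying the continuous-time discounted Liouville equation, the Lebesgue measure of the support of μ₀ is at most the Lebesgue measure of the maximum controlled invariant set: λ(supp μ₀) ≤ λ(X_I). -/

import Mathlib

open MeasureTheory

/-- The (topological) support of a Borel measure: the set of points all of whose
open neighborhoods have positive measure. -/
def msupport {α : Type*} [TopologicalSpace α] [MeasurableSpace α] (μ : Measure α) : Set α :=
  {x | ∀ s : Set α, IsOpen s → x ∈ s → 0 < μ s}

/-- An admissible trajectory of the convexified inclusion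
`ẋ(t) ∈ conv f(x(t), U)`, `x(t) ∈ X`, on `[0, ∞)`: a locally absolutely continuous
function (encoded via its a.e. derivative `d` and the integral representation
`x t = x 0 + ∫_0^t d`) whose derivative lies a.e. in the convex hull of `f(x(t), U)`
and which stays in `X` for all `t ≥ 0`. -/
def IsAdmissible {n m : ℕ} (X : Set (EuclideanSpace ℝ (Fin n)))
    (U : Set (EuclideanSpace ℝ (Fin m)))
    (f : EuclideanSpace ℝ (Fin n) → EuclideanSpace ℝ (Fin m) → EuclideanSpace ℝ (Fin n))
    (x : ℝ → EuclideanSpace ℝ (Fin n)) : Prop :=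
  (∀ t, 0 ≤ t → x t ∈ X) ∧
  ∃ d : ℝ → EuclideanSpace ℝ (Fin n),
    (∀ t, 0 ≤ t → IntervalIntegrable d volume 0 t) ∧
    (∀ t, 0 ≤ t → x t = x 0 + ∫ s in (0:ℝ)..t, d s) ∧
    (∀ᵐ t ∂(volume.restrict (Set.Ici (0:ℝ))), d t ∈ convexHull ℝ ((f (x t)) '' U))

/-- The maximum controlled invariant set of the continuous-time relaxed system. -/
def mciC {n m : ℕ} (X : Set (EuclideanSpace ℝ (Fin n))) (U : Set (EuclideanSpace ℝ (Fin m)))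
    (f : EuclideanSpace ℝ (Fin n) → EuclideanSpace ℝ (Fin m) → EuclideanSpace ℝ (Fin n)) :
    Set (EuclideanSpace ℝ (Fin n)) :=
  {x0 | ∃ x : ℝ → EuclideanSpace ℝ (Fin n), IsAdmissible X U f x ∧ x 0 = x0}

/-- The continuous-time discounted Liouville equation for the pair `(μ₀, μ)`. -/
def LiouvilleC {n m : ℕ}
    (f : EuclideanSpace ℝ (Fin n) → EuclideanSpace ℝ (Fin m) → EuclideanSpace ℝ (Fin n))
    (β : ℝ) (μ₀ : Measure (EuclideanSpace ℝ (Fin n)))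
    (μ : Measure (EuclideanSpace ℝ (Fin n) × EuclideanSpace ℝ (Fin m))) : Prop :=
  ∀ v : EuclideanSpace ℝ (Fin n) → ℝ, ContDiff ℝ 1 v →
    β * ∫ p, v p.1 ∂μ = ∫ x, v x ∂μ₀ + ∫ p, fderiv ℝ v p.1 (f p.1 p.2) ∂μ

/-!
Fix `ε > 0` and let `W y` be the infimum of `exp (-(β * T))` over the durations `T` of the Euler
polygons from `y` whose pieces last at most `ε` and use velocities `f x u` with `x ∈ X` within `ε`
of the piece's start. Prolonging a polygon backwards by one piece shows that `W` gains a factor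
`exp (β * h)` along a step `h • f x u` from any point near `x`. Because of this room around `x`, the
mollification `v` of `W` inherits the growth and is a smooth function with `0 ≤ v` and
`β v ≤ ∇v · f` on `X × U`. The Liouville equation tested with `v` gives `∫ v dμ₀ ≤ 0`, so `v`
vanishes on the support of `μ₀`. Near a zero of `v` there is a zero of `W`, the start of arbitrarily
long polygons. As `ε → 0`, compactness produces from them a limit curve on `[0, ∞)`, which is an
admissible trajectory.
-/

open Set Filter Metric Topology
open scoped NNReal Convolution

section ConvexHull

variable {E : Type*} [NormedAddCommGroup E] [NormedSpace ℝ E] [FiniteDimensional ℝ E]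

theorem convexHull_eq_iUnion_image_stdSimplex (s : Set E) :
    convexHull ℝ s = ⋃ k ∈ Finset.range (Module.finrank ℝ E + 2),
      (fun q : (Fin k → ℝ) × (Fin k → E) => ∑ i, q.1 i • q.2 i) ''
        (stdSimplex ℝ (Fin k) ×ˢ univ.pi fun _ => s) := by
  apply Subset.antisymm
  · intro x hx
    obtain ⟨ι, _, z, w, hz, hind, hw, hsum, rfl⟩ := eq_pos_convex_span_of_mem_convexHull hx
    have hcard : Fintype.card ι ≤ Module.finrank ℝ E + 1 :=
      hind.card_le_finrank_succ.trans (by gcongr; exact Submodule.finrank_le _)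
    let e := Fintype.equivFin ι
    exact mem_biUnion (Finset.mem_coe.2 (Finset.mem_range.2 (Nat.lt_succ_of_le hcard)))
      ⟨(w ∘ e.symm, z ∘ e.symm),
        ⟨⟨fun i => (hw _).le, (e.symm.sum_comp w).trans hsum⟩, fun i _ => hz ⟨_, rfl⟩⟩,
        e.symm.sum_comp fun i => w i • z i⟩
  · simp only [iUnion_subset_iff]
    rintro k - _ ⟨q, ⟨⟨hq0, hq1⟩, hq2⟩, rfl⟩
    exact (convex_convexHull ℝ s).sum_mem (fun i _ => hq0 i) hq1
      fun i _ => subset_convexHull ℝ s (hq2 i trivial)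

theorem isCompact_convexHull_of_isCompact {s : Set E} (hs : IsCompact s) :
    IsCompact (convexHull ℝ s) := by
  rw [convexHull_eq_iUnion_image_stdSimplex]
  exact Finset.isCompact_biUnion _ fun k _ =>
    ((isCompact_stdSimplex ℝ (Fin k)).prod (isCompact_univ_pi fun _ => hs)).image (by fun_prop)

end ConvexHull

section Relations

theorem isCompact_relImage {α β : Type*} [TopologicalSpace α] [TopologicalSpace β]
    {G : SetRel α β} {s : Set α} (hG : IsCompact G) (hs : IsClosed s) : IsCompact (G.image s) := by
  have himage : G.image s = Prod.snd '' (G ∩ Prod.fst ⁻¹' s) := by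
    ext b
    simp [and_comm]
  rw [himage]
  exact (hG.inter_right (hs.preimage continuous_fst)).image continuous_snd

theorem isCompact_relDom {α β : Type*} [TopologicalSpace α] [TopologicalSpace β]
    {G : SetRel α β} (hG : IsCompact G) : IsCompact G.dom := by
  have hdom : G.dom = Prod.fst '' G := by
    ext a
    simp
  exact hdom ▸ hG.image continuous_fst

theorem exists_relImage_ball_subset_of_isOpen {α β : Type*} [MetricSpace α] [TopologicalSpace β]
    {G : SetRel α β} {x : α} {V : Set β} (hG : IsCompact G) (hV : IsOpen V)
    (hxV : G.image {x} ⊆ V) : ∃ ρ > 0, G.image (ball x ρ) ⊆ V := by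
  let bad : Set α := Prod.fst '' (G \ Prod.snd ⁻¹' V)
  have hbad : IsClosed bad := ((hG.diff (hV.preimage continuous_snd)).image continuous_fst).isClosed
  have hx : x ∉ bad := by
    rintro ⟨⟨_, w⟩, ⟨hw, hwV⟩, rfl⟩
    exact hwV (hxV ⟨_, rfl, hw⟩)
  obtain ⟨ρ, hρ, hball⟩ := Metric.isOpen_iff.1 hbad.isOpen_compl x hx
  refine ⟨ρ, hρ, fun w ⟨y, hy, hyw⟩ => ?_⟩
  by_contra hwV
  exact hball hy ⟨(y, w), ⟨hyw, hwV⟩, rfl⟩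

theorem closedConvexHull_relImage_mono {α E : Type*} [AddCommGroup E] [Module ℝ E]
    [TopologicalSpace E] {G : SetRel α E} {s t : Set α} (hst : s ⊆ t) :
    closedConvexHull ℝ (G.image s) ⊆ closedConvexHull ℝ (G.image t) :=
  (closedConvexHull ℝ).monotone (SetRel.image_mono hst)

theorem iInter_closedConvexHull_relImage_ball_subset {α E : Type*} [MetricSpace α]
    [NormedAddCommGroup E] [NormedSpace ℝ E] [FiniteDimensional ℝ E] {G : SetRel α E}
    (hG : IsCompact G) (x : α) :
    ⋂ r > (0 : ℝ), closedConvexHull ℝ (G.image (ball x r)) ⊆ convexHull ℝ (G.image {x}) := by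
  have hclosed : IsClosed (convexHull ℝ (G.image {x})) :=
    (isCompact_convexHull_of_isCompact (isCompact_relImage hG isClosed_singleton)).isClosed
  intro w hw
  rw [← hclosed.closure_eq, closure_eq_iInter_cthickening]
  refine mem_iInter₂.2 fun δ hδ => ?_
  obtain ⟨ρ, hρ, hball⟩ := exists_relImage_ball_subset_of_isOpen hG isOpen_thickening
    ((subset_convexHull ℝ _).trans (self_subset_thickening hδ (convexHull ℝ (G.image {x}))))
  exact closedConvexHull_min (hball.trans (thickening_subset_cthickening _ _))
    ((convex_convexHull ℝ _).cthickening δ) isClosed_cthickening (mem_iInter₂.1 hw ρ hρ)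

end Relations

section Calculus

theorem integral_deriv_eq_sub_of_lipschitzWith {E : Type*} [NormedAddCommGroup E]
    [NormedSpace ℝ E] [FiniteDimensional ℝ E] {C : ℝ≥0} {x : ℝ → E} (hx : LipschitzWith C x)
    (a b : ℝ) : IntervalIntegrable (deriv x) volume a b ∧ ∫ t in a..b, deriv x t = x b - x a := by
  have hint : IntervalIntegrable (deriv x) volume a b :=
    (intervalIntegrable_const (c := (C : ℝ))).mono_fun (aestronglyMeasurable_deriv _ _)
      (Eventually.of_forall fun t => by simpa using norm_deriv_le_of_lipschitz (x₀ := t) hx)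
  refine ⟨hint, (SeparatingDual.eq_iff_forall_dual_eq (R := ℝ)).2 fun P => ?_⟩
  have hPx : AbsolutelyContinuousOnInterval (P ∘ x) a b :=
    (P.lipschitz.comp hx).lipschitzOnWith.absolutelyContinuousOnInterval
  have hderiv : ∀ᵐ t, P (deriv x t) = deriv (P ∘ x) t := by
    filter_upwards [hx.ae_differentiableAt] with t ht
    exact (P.hasFDerivAt.comp_hasDerivAt t ht.hasDerivAt).deriv.symm
  calc P (∫ t in a..b, deriv x t) = ∫ t in a..b, P (deriv x t) :=
        (P.intervalIntegral_comp_comm hint).symm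
    _ = ∫ t in a..b, deriv (P ∘ x) t :=
        intervalIntegral.integral_congr_ae (hderiv.mono fun _ ht _ => ht)
    _ = P (x b - x a) := by rw [hPx.integral_deriv_eq_sub, P.map_sub]; rfl

theorem slope_mem_of_slope_mem_of_slope_mem {E : Type*} [AddCommGroup E] [Module ℝ E] {K : Set E}
    (hK : Convex ℝ K) {x : ℝ → E} {a b c : ℝ} (hab : a < b) (hbc : b < c)
    (hxab : slope x a b ∈ K) (hxbc : slope x b c ∈ K) : slope x a c ∈ K := by
  have hac : 0 < c - a := by linarith
  rw [← lineMap_slope_slope_sub_div_sub x a b c (hab.trans hbc).ne]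
  exact hK.lineMap_mem hxab hxbc
    ⟨div_nonneg (by linarith) hac.le, (div_le_one hac).2 (by linarith)⟩

theorem mul_le_fderiv_of_exp_mul_le {E : Type*} [NormedAddCommGroup E] [NormedSpace ℝ E]
    {v : E → ℝ} {x w : E} {β : ℝ} (hv : DifferentiableAt ℝ v x)
    (hgrow : ∀ᶠ h in 𝓝[>] (0 : ℝ), Real.exp (β * h) * v x ≤ v (x + h • w)) :
    β * v x ≤ fderiv ℝ v x w := by
  have hexp : HasDerivAt (fun h => Real.exp (β * h) * v x) (β * v x) 0 := by
    simpa using (((hasDerivAt_id (0 : ℝ)).const_mul β).exp).mul_const (v x)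
  refine le_of_tendsto_of_tendsto hexp.tendsto_slope_zero_right
    (hv.hasFDerivAt.hasLineDerivAt w).tendsto_slope_zero_right ?_
  filter_upwards [hgrow, self_mem_nhdsWithin] with h hh (hpos : 0 < h)
  simpa using mul_le_mul_of_nonneg_left (sub_le_sub_right hh (v x)) (inv_pos.2 hpos).le

theorem locallyIntegrable_of_mem_Icc {α : Type*} [TopologicalSpace α] [MeasurableSpace α]
    {μ : Measure α} [IsLocallyFiniteMeasure μ] {W : α → ℝ} {c d : ℝ}
    (hWm : Measurable W) (hW : ∀ y, W y ∈ Icc c d) : LocallyIntegrable W μ :=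
  (locallyIntegrable_const (max |c| |d|)).mono hWm.aestronglyMeasurable
    (Eventually.of_forall fun y =>
      (abs_le_max_abs_abs (hW y).1 (hW y).2).trans (Real.le_norm_self _))

end Calculus

section Mollification

variable {E : Type*} [NormedAddCommGroup E] [NormedSpace ℝ E] [FiniteDimensional ℝ E]
  [MeasurableSpace E]

/-- The mollification of `W` by the normalized bump function `φ`, that is, the average of `W` over
balls of radius `φ.rOut` with the smooth weight `φ`. -/
noncomputable def mollify (φ : ContDiffBump (0 : E)) (μ : Measure E) (W : E → ℝ) : E → ℝ :=
  φ.normed μ ⋆[ContinuousLinearMap.lsmul ℝ ℝ, μ] W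

variable (φ : ContDiffBump (0 : E)) (μ : Measure E)

theorem mollify_smul (c : ℝ) (W : E → ℝ) (x : E) : mollify φ μ (c • W) x = c * mollify φ μ W x :=
  congrFun convolution_smul x

theorem mollify_add_right (W : E → ℝ) (x z : E) :
    mollify φ μ W (x + z) = mollify φ μ (fun y => W (y + z)) x := by
  simp only [mollify, convolution_def, sub_add_eq_add_sub]

variable [BorelSpace E] [μ.IsAddHaarMeasure]

theorem mollify_const (c : ℝ) (x : E) : mollify φ μ (fun _ => c) x = c :=
  ContDiffBump.normed_convolution_eq_right fun _ _ => rfl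

variable {φ μ} {W W' : E → ℝ} {x : E}

theorem contDiff_mollify (hW : LocallyIntegrable W μ) : ContDiff ℝ 1 (mollify φ μ W) :=
  φ.hasCompactSupport_normed.contDiff_convolution_left _ (n := 1) φ.contDiff_normed hW

theorem integrable_normed_mul (hW : LocallyIntegrable W μ) (x : E) :
    Integrable (fun t => φ.normed μ t * W (x - t)) μ :=
  φ.hasCompactSupport_normed.convolutionExists_left (ContinuousLinearMap.lsmul ℝ ℝ)
    φ.continuous_normed hW x

theorem mollify_le_mollify (hW : LocallyIntegrable W μ) (hW' : LocallyIntegrable W' μ)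
    (hle : ∀ y ∈ ball x φ.rOut, W y ≤ W' y) : mollify φ μ W x ≤ mollify φ μ W' x := by
  refine integral_mono (integrable_normed_mul hW x) (integrable_normed_mul hW' x) fun t => ?_
  by_cases ht : φ.normed μ t = 0
  · simp [ht]
  · have hxt : x - t ∈ ball x φ.rOut := by
      have ht : t ∈ Function.support (φ.normed μ) := ht
      rw [φ.support_normed_eq] at ht
      simpa using ht
    exact mul_le_mul_of_nonneg_left (hle _ hxt) (φ.nonneg_normed t)

theorem exists_eq_zero_of_mollify_eq_zero (hW : LocallyIntegrable W μ) (hW0 : ∀ y, 0 ≤ W y)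
    (hx : mollify φ μ W x = 0) : ∃ y ∈ ball x φ.rOut, W y = 0 := by
  have hae : ∀ᵐ t ∂μ, φ.normed μ t * W (x - t) = 0 :=
    (integral_eq_zero_iff_of_nonneg (fun t => mul_nonneg (φ.nonneg_normed t) (hW0 _))
      (integrable_normed_mul hW x)).1 hx
  obtain ⟨t, ht, ht0⟩ : ∃ t ∈ ball (0 : E) φ.rOut, φ.normed μ t * W (x - t) = 0 := by
    by_contra! hne
    exact (measure_ball_pos μ 0 φ.rOut_pos).ne' (measure_mono_null hne (ae_iff.1 hae))
  rw [← φ.support_normed_eq (μ := μ)] at ht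
  refine ⟨x - t, ?_, (mul_eq_zero.1 ht0).resolve_left ht⟩
  rw [φ.support_normed_eq] at ht
  simpa using ht

end Mollification

section EulerPolygons

variable {E : Type*} [NormedAddCommGroup E] [NormedSpace ℝ E] {G : SetRel E E}

/-- `HasEulerPolygon G ε T y` says that some polygonal path of total duration `T` starts at `y` and
has pieces of duration at most `ε`, each traversed with a velocity which `G` allows at a point
within distance `ε` of the start of the piece. -/
inductive HasEulerPolygon (G : SetRel E E) (ε : ℝ) : ℝ → E → Prop
  | refl (y : E) : HasEulerPolygon G ε 0 y
  | step {T h : ℝ} {x w y : E} : (x, w) ∈ G → h ∈ Icc 0 ε → y ∈ ball x ε →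
      HasEulerPolygon G ε T (y + h • w) → HasEulerPolygon G ε (h + T) y

theorem HasEulerPolygon.isOpen (G : SetRel E E) (ε T : ℝ) :
    IsOpen {y | HasEulerPolygon G ε T y} := by
  refine isOpen_iff_mem_nhds.2 fun y hy => ?_
  induction hy with
  | refl => exact univ_mem' HasEulerPolygon.refl
  | @step T h x w y hxw hh hy _ ih =>
    have hnear : ∀ᶠ z in 𝓝 y, HasEulerPolygon G ε T (z + h • w) :=
      (continuous_add_const (h • w)).continuousAt.eventually ih
    filter_upwards [hnear, isOpen_ball.mem_nhds hy] with z hz hzx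
    exact hz.step hxw hh hzx

theorem HasEulerPolygon.add_right {ε δ T : ℝ} {y c : E} (hy : HasEulerPolygon G ε T y)
    (hc : ‖c‖ ≤ δ) : HasEulerPolygon G (ε + δ) T (y + c) := by
  induction hy with
  | refl => exact .refl _
  | @step T h x w y hxw hh hy _ ih =>
    rw [add_right_comm] at ih
    refine .step hxw ⟨hh.1, by linarith [hh.2, norm_nonneg c]⟩ ?_ ih
    rw [mem_ball] at hy ⊢
    calc dist (y + c) x ≤ dist y x + ‖c‖ := by
          simpa [add_comm] using dist_triangle (y + c) y x
      _ < ε + δ := add_lt_add_of_lt_of_le hy hc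

/-- An approximate solution on `[0, T]` of the differential inclusion with graph `G`, up to an error
`r` in the state. The condition is on mean velocities rather than on derivatives, so that it
survives pointwise limits. With `M` a bound for the velocities, the radius `r + M * (b - a)`
accounts for the motion of `γ` during `[a, b]`. -/
def IsApproxSolutionOn (G : SetRel E E) (M : ℝ≥0) (r T : ℝ) (γ : ℝ → E) : Prop :=
  ∀ ⦃a b : ℝ⦄, 0 ≤ a → a < b → b ≤ T →
    slope γ a b ∈ closedConvexHull ℝ (G.image (ball (γ a) (r + M * (b - a))))

namespace IsApproxSolutionOn

variable {M : ℝ≥0} {r h T : ℝ} {γ γ' : ℝ → E}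

theorem congr (hγ : IsApproxSolutionOn G M r T γ) (hγγ' : EqOn γ γ' (Icc 0 T)) :
    IsApproxSolutionOn G M r T γ' := by
  intro a b ha hab hb
  have hslope : slope γ' a b = slope γ a b := by
    simp only [slope_def_module, hγγ' ⟨ha, hab.le.trans hb⟩, hγγ' ⟨ha.trans hab.le, hb⟩]
  rw [hslope, ← hγγ' ⟨ha, hab.le.trans hb⟩]
  exact hγ ha hab hb

theorem lipschitzOnWith (hM : G.cod ⊆ closedBall 0 M) (hγ : IsApproxSolutionOn G M r T γ) :
    LipschitzOnWith M γ (Icc 0 T) := by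
  have hle {a b : ℝ} (ha : 0 ≤ a) (hab : a < b) (hb : b ≤ T) :
      dist (γ a) (γ b) ≤ M * dist a b := by
    have himage : G.image (ball (γ a) (r + M * (b - a))) ⊆ closedBall 0 M :=
      fun w ⟨x, _, hxw⟩ => hM ⟨x, hxw⟩
    have hslope : slope γ a b ∈ closedBall 0 (M : ℝ) :=
      closedConvexHull_min himage (convex_closedBall _ _) isClosed_closedBall (hγ ha hab hb)
    calc dist (γ a) (γ b) = ‖(b - a) • slope γ a b‖ := by
          rw [sub_smul_slope, vsub_eq_sub, dist_eq_norm']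
      _ = ‖slope γ a b‖ * dist a b := by rw [norm_smul, dist_eq_norm' a b, mul_comm]
      _ ≤ M * dist a b := by gcongr; exact mem_closedBall_zero_iff.1 hslope
  refine LipschitzOnWith.of_dist_le_mul fun a ha b hb => ?_
  rcases lt_trichotomy a b with hab | rfl | hba
  · exact hle ha.1 hab hb.2
  · simp
  · rw [dist_comm, dist_comm a]
    exact hle hb.1 hba ha.2

theorem segment {ε : ℝ} {x w y : E} (hxw : (x, w) ∈ G) (hw : ‖w‖ ≤ M) (hh : h ≤ ε)
    (hy : y ∈ ball x ε) : IsApproxSolutionOn G M (ε + M * ε) h fun t => y + t • w := by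
  intro a b ha hab hb
  have hslope : slope (fun t => y + t • w) a b = w := by
    rw [slope_def_module, add_sub_add_left_eq_sub, ← sub_smul,
      inv_smul_smul₀ (sub_ne_zero.2 hab.ne')]
  rw [hslope]
  refine subset_closedConvexHull ⟨x, ?_, hxw⟩
  have hmove : dist y (y + a • w) ≤ M * ε := by
    rw [dist_self_add_right, norm_smul, Real.norm_of_nonneg ha, mul_comm]
    gcongr
    linarith
  calc dist x (y + a • w) ≤ dist x y + dist y (y + a • w) := dist_triangle _ _ _
    _ < ε + M * ε := add_lt_add_of_lt_of_le (mem_ball'.1 hy) hmove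
    _ ≤ ε + M * ε + M * (b - a) := le_add_of_nonneg_right (by have := hab.le; positivity)

theorem concat (hM : G.cod ⊆ closedBall 0 M) (hh : 0 ≤ h) (hγ : IsApproxSolutionOn G M r h γ)
    (hγh : IsApproxSolutionOn G M r T fun t => γ (h + t)) : IsApproxSolutionOn G M r (h + T) γ := by
  have hafter {a b : ℝ} (ha : h ≤ a) (hab : a < b) (hb : b ≤ h + T) :
      slope γ a b ∈ closedConvexHull ℝ (G.image (ball (γ a) (r + M * (b - a)))) := by
    simpa [slope_def_module] using
      hγh (sub_nonneg.2 ha) (sub_lt_sub_right hab h) (sub_le_iff_le_add'.2 hb)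
  intro a b ha hab hb
  rcases le_or_gt b h with hbh | hhb
  · exact hγ ha hab hbh
  rcases le_or_gt h a with hha | hah
  · exact hafter hha hab hb
  have hmove : dist (γ h) (γ a) ≤ M * (h - a) :=
    ((hγ.lipschitzOnWith hM).dist_le_mul h ⟨hh, le_rfl⟩ a ⟨ha, hah.le⟩).trans_eq
      (by rw [Real.dist_eq, abs_of_pos (sub_pos.2 hah)])
  refine slope_mem_of_slope_mem_of_slope_mem convex_closedConvexHull hah hhb
    (closedConvexHull_relImage_mono (ball_subset_ball ?_) (hγ ha hah le_rfl))
    (closedConvexHull_relImage_mono (ball_subset_ball' ?_) (hafter le_rfl hhb hb))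
  · gcongr
  · linear_combination hmove

end IsApproxSolutionOn

theorem HasEulerPolygon.exists_isApproxSolutionOn {M : ℝ≥0} {ε T : ℝ} {y : E}
    (hM : G.cod ⊆ closedBall 0 M) (hy : HasEulerPolygon G ε T y) :
    ∃ γ, γ 0 = y ∧ IsApproxSolutionOn G M (ε + M * ε) T γ := by
  induction hy with
  | refl y => exact ⟨fun _ => y, rfl, fun a b ha hab hb => absurd (ha.trans_lt hab) hb.not_gt⟩
  | @step T h x w y hxw hh hy _ ih =>
    obtain ⟨γ, hγ0, hγ⟩ := ih
    let η : ℝ → E := fun t => if t ≤ h then y + t • w else γ (t - h)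
    have hbefore : EqOn (fun t => y + t • w) η (Icc 0 h) := fun t ht => (if_pos ht.2).symm
    have hafter : EqOn γ (fun t => η (h + t)) (Icc 0 T) := by
      intro t ht
      rcases ht.1.eq_or_lt with rfl | htpos
      · simp [η, hγ0]
      · simp [η, htpos.not_ge]
    have hw : ‖w‖ ≤ M := mem_closedBall_zero_iff.1 (hM ⟨x, hxw⟩)
    exact ⟨η, by simp [η, hh.1], .concat hM hh.1
      ((IsApproxSolutionOn.segment hxw hw hh.2 hy).congr hbefore) (hγ.congr hafter)⟩

end EulerPolygons

section LimitSolutions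

variable {E : Type*} [NormedAddCommGroup E] [NormedSpace ℝ E] {G : SetRel E E} {M : ℝ≥0}

theorem isApproxSolutionOn_of_tendsto {ι : Type*} {l : Filter ι} [l.NeBot] {γ : ι → ℝ → E}
    {r T : ι → ℝ} {x : ℝ → E} (hγ : ∀ i, IsApproxSolutionOn G M (r i) (T i) (γ i))
    (hr : Tendsto r l (𝓝 0)) (hT : Tendsto T l atTop)
    (hx : ∀ t ≥ 0, Tendsto (fun i => γ i t) l (𝓝 (x t))) {ρ : ℝ} (hρ : 0 < ρ) (S : ℝ) :
    IsApproxSolutionOn G M ρ S x := by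
  intro a b ha hab _
  have hxa : Tendsto (fun i => γ i a) l (𝓝 (x a)) := hx a ha
  have hslope : Tendsto (fun i => slope (γ i) a b) l (𝓝 (slope x a b)) := by
    simp only [slope_def_module]
    exact ((hx b (ha.trans hab.le)).sub hxa).const_smul _
  have herr : ∀ᶠ i in l, r i + dist (γ i a) (x a) < ρ := by
    have hlim : Tendsto (fun i => r i + dist (γ i a) (x a)) l (𝓝 0) := by
      simpa using hr.add (tendsto_iff_dist_tendsto_zero.1 hxa)
    exact hlim.eventually_lt_const hρ
  refine isClosed_closedConvexHull.mem_of_tendsto hslope ?_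
  filter_upwards [herr, hT.eventually_ge_atTop b] with i hi hbT
  exact closedConvexHull_relImage_mono (ball_subset_ball' (by linarith)) (hγ i ha hab hbT)

theorem exists_tendsto_of_isApproxSolutionOn [ProperSpace E] (hM : G.cod ⊆ closedBall 0 M)
    {γ : ℕ → ℝ → E} {r T : ℕ → ℝ} {y : E} (hγ : ∀ k, IsApproxSolutionOn G M (r k) (T k) (γ k))
    (hT : Tendsto T atTop atTop) (hγ0 : ∀ k, γ k 0 = y) :
    ∃ x : ℝ → E, ∀ t ≥ 0, Tendsto (fun k => γ k t) (hyperfilter ℕ) (𝓝 (x t)) := by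
  have hlim (t : ℝ) : ∃ z, 0 ≤ t → Tendsto (fun k => γ k t) (hyperfilter ℕ) (𝓝 z) := by
    by_cases ht : 0 ≤ t
    swap
    · exact ⟨y, fun h => absurd h ht⟩
    have hbdd : ∀ᶠ k in (hyperfilter ℕ : Filter ℕ), γ k t ∈ closedBall y (M * t) := by
      filter_upwards [Nat.hyperfilter_le_atTop (hT.eventually_ge_atTop t)] with k htk
      simpa [hγ0, abs_of_nonneg ht] using ((hγ k).lipschitzOnWith hM).dist_le_mul
        t ⟨ht, htk⟩ 0 ⟨le_rfl, ht.trans htk⟩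
    obtain ⟨z, -, hz⟩ := (isCompact_closedBall y (M * t)).ultrafilter_le_nhds'
      ((hyperfilter ℕ).map fun k => γ k t) hbdd
    exact ⟨z, fun _ => hz⟩
  choose x hx using hlim
  exact ⟨x, hx⟩

theorem exists_forall_isApproxSolutionOn [ProperSpace E] (hM : G.cod ⊆ closedBall 0 M) {y : E}
    (hy : ∀ ε > 0, ∀ k : ℝ, ∃ T ≥ k, HasEulerPolygon G ε T y) :
    ∃ x : ℝ → E, x 0 = y ∧ ∀ ρ > 0, ∀ S, IsApproxSolutionOn G M ρ S x := by
  let ε (k : ℕ) : ℝ := 1 / (k + 1)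
  have hε : Tendsto (fun k => ε k + M * ε k) (hyperfilter ℕ) (𝓝 0) := by
    have hε0 : Tendsto ε (hyperfilter ℕ) (𝓝 0) :=
      tendsto_one_div_add_atTop_nhds_zero_nat.mono_left Nat.hyperfilter_le_atTop
    simpa using hε0.add (hε0.const_mul (M : ℝ))
  choose T hkT hT using fun k : ℕ => hy (ε k) Nat.one_div_pos_of_nat k
  have hTtop : Tendsto T atTop atTop := tendsto_atTop_mono hkT tendsto_natCast_atTop_atTop
  choose γ hγ0 hγ using fun k => (hT k).exists_isApproxSolutionOn hM
  obtain ⟨x, hx⟩ := exists_tendsto_of_isApproxSolutionOn hM hγ hTtop hγ0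
  refine ⟨x, tendsto_nhds_unique (hx 0 le_rfl) ?_, fun ρ hρ S =>
    isApproxSolutionOn_of_tendsto hγ hε (hTtop.mono_left Nat.hyperfilter_le_atTop) hx hρ S⟩
  simp only [hγ0, tendsto_const_nhds]

theorem eventually_slope_mem_closedConvexHull {x : ℝ → E}
    (hx : ∀ ρ > 0, ∀ S, IsApproxSolutionOn G M ρ S x) {t ρ : ℝ} (ht : 0 ≤ t) (hρ : 0 < ρ) :
    ∀ᶠ b in 𝓝[>] t, slope x t b ∈ closedConvexHull ℝ (G.image (ball (x t) ρ)) := by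
  have hradius : Tendsto (fun b => ρ / 2 + M * (b - t)) (𝓝[>] t) (𝓝 (ρ / 2)) := by
    have hcont : Continuous fun b => ρ / 2 + M * (b - t) := by fun_prop
    simpa using (hcont.tendsto t).mono_left nhdsWithin_le_nhds
  filter_upwards [self_mem_nhdsWithin, hradius.eventually_le_const (half_lt_self hρ)] with b htb hb
  exact closedConvexHull_relImage_mono (ball_subset_ball hb) (hx _ (half_pos hρ) b ht htb le_rfl)

theorem mem_relDom_of_forall_isApproxSolutionOn (hG : IsClosed G.dom) {x : ℝ → E}
    (hx : ∀ ρ > 0, ∀ S, IsApproxSolutionOn G M ρ S x) {t : ℝ} (ht : 0 ≤ t) : x t ∈ G.dom := by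
  refine hG.closure_subset (Metric.mem_closure_iff.2 fun ρ hρ => ?_)
  obtain ⟨b, hb⟩ := (eventually_slope_mem_closedConvexHull hx ht hρ).exists
  obtain ⟨w, y, hy, hyw⟩ : (G.image (ball (x t) ρ)).Nonempty := by
    rw [← convexHull_nonempty_iff (𝕜 := ℝ), ← closure_nonempty_iff,
      ← closedConvexHull_eq_closure_convexHull]
    exact ⟨_, hb⟩
  exact ⟨y, ⟨w, hyw⟩, mem_ball'.1 hy⟩

theorem deriv_mem_convexHull_relImage [FiniteDimensional ℝ E] (hG : IsCompact G) {x : ℝ → E}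
    (hx : ∀ ρ > 0, ∀ S, IsApproxSolutionOn G M ρ S x) {t : ℝ} (ht : 0 ≤ t)
    (hdiff : DifferentiableAt ℝ x t) : deriv x t ∈ convexHull ℝ (G.image {x t}) := by
  refine iInter_closedConvexHull_relImage_ball_subset hG (x t) (mem_iInter₂.2 fun ρ hρ => ?_)
  have hslope : Tendsto (slope x t) (𝓝[>] t) (𝓝 (deriv x t)) :=
    hdiff.hasDerivAt.tendsto_slope.mono_left (nhdsGT_le_nhdsNE t)
  exact isClosed_closedConvexHull.mem_of_tendsto hslope
    (eventually_slope_mem_closedConvexHull hx ht hρ)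

theorem exists_lipschitzWith_solution [FiniteDimensional ℝ E] (hG : IsCompact G) {y : E}
    (hy : ∀ ε > 0, ∀ k : ℝ, ∃ T ≥ k, HasEulerPolygon G ε T y) :
    ∃ (C : ℝ≥0) (x : ℝ → E), LipschitzWith C x ∧ x 0 = y ∧ (∀ t ≥ 0, x t ∈ G.dom) ∧
      ∀ᵐ t ∂volume.restrict (Ici 0), deriv x t ∈ convexHull ℝ (G.image {x t}) := by
  have : ProperSpace E := FiniteDimensional.proper ℝ E
  obtain ⟨M, hM⟩ : ∃ M : ℝ≥0, G.cod ⊆ closedBall 0 M := by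
    obtain ⟨R, hR⟩ := (isCompact_relImage hG isClosed_univ).isBounded.subset_closedBall 0
    rw [SetRel.image_univ_right] at hR
    exact ⟨R.toNNReal, hR.trans (closedBall_subset_closedBall R.le_coe_toNNReal)⟩
  obtain ⟨z, hz0, hz⟩ := exists_forall_isApproxSolutionOn hM hy
  let x : ℝ → E := fun t => z (max t 0)
  have hzx : EqOn z x (Ici 0) := fun t ht => by simp only [x, max_eq_left (mem_Ici.1 ht)]
  have hx : ∀ ρ > 0, ∀ S, IsApproxSolutionOn G M ρ S x :=
    fun ρ hρ S => (hz ρ hρ S).congr (hzx.mono Icc_subset_Ici_self)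
  have hzlip : LipschitzOnWith M z (Ici 0) := fun s hs t ht =>
    (hz 1 one_pos (max s t)).lipschitzOnWith hM ⟨hs, le_max_left s t⟩ ⟨ht, le_max_right s t⟩
  have hxlip : LipschitzWith M x := by
    simpa [x, Function.comp_def] using lipschitzOnWith_univ.1
      (hzlip.comp (LipschitzWith.id.max_const 0).lipschitzOnWith fun t _ => le_max_right t 0)
  refine ⟨M, x, hxlip, (hzx self_mem_Ici).symm.trans hz0, fun t ht =>
    mem_relDom_of_forall_isApproxSolutionOn (isCompact_relDom hG).isClosed hx ht, ?_⟩
  filter_upwards [ae_restrict_of_ae hxlip.ae_differentiableAt, ae_restrict_mem measurableSet_Ici]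
    with t hdiff ht using deriv_mem_convexHull_relImage hG hx ht hdiff

end LimitSolutions

section Subsolutions

variable {E : Type*} [NormedAddCommGroup E] [NormedSpace ℝ E] {G : SetRel E E} {β ε : ℝ}

/-- A smooth subsolution, with values in `[0, 1]`, of the discounted transport inequality
`β v ≤ ∇v · w` along the velocities `w` which the differential inclusion with graph `G` allows. -/
structure IsSmoothSubsolution (G : SetRel E E) (β : ℝ) (v : E → ℝ) : Prop where
  contDiff : ContDiff ℝ 1 v
  mem_Icc : ∀ x, v x ∈ Icc 0 1
  mul_le_fderiv : ∀ ⦃x w⦄, (x, w) ∈ G → β * v x ≤ fderiv ℝ v x w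

theorem isSmoothSubsolution_mollify [FiniteDimensional ℝ E] [MeasurableSpace E] [BorelSpace E]
    {φ : ContDiffBump (0 : E)} {μ : Measure E} [μ.IsAddHaarMeasure] {W : E → ℝ}
    (hWm : Measurable W) (hW : ∀ y, W y ∈ Icc 0 1)
    (hgrow : ∀ ⦃x w⦄, (x, w) ∈ G → ∀ y ∈ ball x φ.rOut, ∀ h ∈ Ioc 0 φ.rOut,
      Real.exp (β * h) * W y ≤ W (y + h • w)) :
    IsSmoothSubsolution G β (mollify φ μ W) := by
  have hint (z : E) : LocallyIntegrable (fun y => W (y + z)) μ :=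
    locallyIntegrable_of_mem_Icc (hWm.comp (measurable_add_const z)) fun y => hW (y + z)
  have hint0 : LocallyIntegrable W μ := locallyIntegrable_of_mem_Icc hWm hW
  refine ⟨contDiff_mollify hint0, fun x => ⟨?_, ?_⟩, fun x w hxw => ?_⟩
  · exact (mollify_const φ μ 0 x).symm.trans_le <|
      mollify_le_mollify (locallyIntegrable_const 0) hint0 fun y _ => (hW y).1
  · exact (mollify_le_mollify hint0 (locallyIntegrable_const 1) fun y _ => (hW y).2).trans_eq
      (mollify_const φ μ 1 x)
  · refine mul_le_fderiv_of_exp_mul_le ((contDiff_mollify hint0).differentiable one_ne_zero x) ?_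
    filter_upwards [Ioc_mem_nhdsGT φ.rOut_pos] with h hh
    rw [← mollify_smul, mollify_add_right]
    exact mollify_le_mollify (hint0.smul _) (hint _) fun y hy => hgrow hxw y hy h hh

/-- The infimum of `exp (-(β * T))` over the durations `T` of the Euler polygons from `y`. For
`β > 0` it vanishes exactly when these durations are unbounded, and it grows at rate at least `β`
along the velocities which `G` allows. -/
noncomputable def escapeCost (G : SetRel E E) (β ε : ℝ) (y : E) : ℝ :=
  sInf ((fun T => Real.exp (-(β * T))) '' {T | HasEulerPolygon G ε T y})

variable {x w y : E}

theorem escapeCost_le {T : ℝ} (hy : HasEulerPolygon G ε T y) :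
    escapeCost G β ε y ≤ Real.exp (-(β * T)) :=
  csInf_le ⟨0, forall_mem_image.2 fun _ _ => (Real.exp_pos _).le⟩ (mem_image_of_mem _ hy)

theorem le_escapeCost {c : ℝ} (hc : ∀ T, HasEulerPolygon G ε T y → c ≤ Real.exp (-(β * T))) :
    c ≤ escapeCost G β ε y :=
  le_csInf ⟨_, mem_image_of_mem _ (HasEulerPolygon.refl y)⟩ (forall_mem_image.2 fun T hT => hc T hT)

theorem escapeCost_mem_Icc (y : E) : escapeCost G β ε y ∈ Icc 0 1 :=
  ⟨le_escapeCost fun _ _ => (Real.exp_pos _).le, by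
    simpa using escapeCost_le (β := β) (HasEulerPolygon.refl (G := G) (ε := ε) y)⟩

theorem escapeCost_lt_iff {c : ℝ} :
    escapeCost G β ε y < c ↔ ∃ T, HasEulerPolygon G ε T y ∧ Real.exp (-(β * T)) < c := by
  refine ⟨fun hc => ?_, fun ⟨T, hT, hTc⟩ => (escapeCost_le hT).trans_lt hTc⟩
  contrapose! hc
  exact le_escapeCost hc

theorem measurable_escapeCost [MeasurableSpace E] [BorelSpace E] :
    Measurable (escapeCost G β ε) := by
  refine measurable_of_Iio fun c => IsOpen.measurableSet ?_
  simp only [preimage, mem_Iio, escapeCost_lt_iff, ofPred_exists, ofPred_and]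
  exact isOpen_iUnion fun T => (HasEulerPolygon.isOpen G ε T).inter isOpen_const

theorem exp_mul_escapeCost_le {h : ℝ} (hxw : (x, w) ∈ G) (hy : y ∈ ball x ε) (hh : h ∈ Icc 0 ε) :
    Real.exp (β * h) * escapeCost G β ε y ≤ escapeCost G β ε (y + h • w) := by
  refine le_escapeCost fun T hT => ?_
  calc Real.exp (β * h) * escapeCost G β ε y
      ≤ Real.exp (β * h) * Real.exp (-(β * (h + T))) :=
        mul_le_mul_of_nonneg_left (escapeCost_le (hT.step hxw hh hy)) (Real.exp_pos _).le
    _ = Real.exp (-(β * T)) := by rw [← Real.exp_add]; ring_nf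

theorem exists_hasEulerPolygon_of_escapeCost_eq_zero (hβ : 0 < β) (hy : escapeCost G β ε y = 0)
    (k : ℝ) : ∃ T ≥ k, HasEulerPolygon G ε T y := by
  obtain ⟨T, hT, hkT⟩ := escapeCost_lt_iff.1 (hy.trans_lt (Real.exp_pos (-(β * k))))
  rw [Real.exp_lt_exp, neg_lt_neg_iff] at hkT
  exact ⟨T, (lt_of_mul_lt_mul_left hkT hβ.le).le, hT⟩

theorem exists_isSmoothSubsolution [FiniteDimensional ℝ E] (G : SetRel E E) (hβ : 0 < β)
    (hε : 0 < ε) : ∃ v, IsSmoothSubsolution G β v ∧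
      ∀ x, v x = 0 → ∀ k : ℝ, ∃ T ≥ k, HasEulerPolygon G ε T x := by
  borelize E
  let μ : Measure E := Measure.addHaar
  let φ : ContDiffBump (0 : E) := ⟨ε / 4, ε / 2, by positivity, by linarith⟩
  have hv : IsSmoothSubsolution G β (mollify φ μ (escapeCost G β (ε / 2))) :=
    isSmoothSubsolution_mollify measurable_escapeCost escapeCost_mem_Icc
      fun x w hxw y hy h hh => exp_mul_escapeCost_le hxw hy (Ioc_subset_Icc_self hh)
  refine ⟨_, hv, fun x hx k => ?_⟩
  obtain ⟨y, hyx, hy⟩ := exists_eq_zero_of_mollify_eq_zero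
    (locallyIntegrable_of_mem_Icc measurable_escapeCost escapeCost_mem_Icc)
    (fun y => (escapeCost_mem_Icc y).1) hx
  obtain ⟨T, hkT, hT⟩ := exists_hasEulerPolygon_of_escapeCost_eq_zero hβ hy k
  have hxT := hT.add_right (mem_ball_iff_norm'.1 hyx).le
  rw [add_halves, add_sub_cancel] at hxT
  exact ⟨T, hkT, hxT⟩

end Subsolutions

section Duality

theorem msupport_eq_support {α : Type*} [TopologicalSpace α] [MeasurableSpace α] (μ : Measure α) :
    msupport μ = μ.support := by
  rw [Measure.support_eq_forall_isOpen]
  exact Set.ext fun x => forall_congr' fun s => forall_comm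

theorem eq_zero_of_integral_eq_zero_of_mem_msupport {α : Type*} [TopologicalSpace α]
    [MeasurableSpace α] {μ : Measure α} {v : α → ℝ} (hv : Continuous v) (hv0 : 0 ≤ v)
    (hint : Integrable v μ) (hzero : ∫ x, v x ∂μ = 0) {x : α} (hx : x ∈ msupport μ) : v x = 0 := by
  by_contra hne
  exact (hx {x | v x ≠ 0} (isOpen_ne_fun hv continuous_const) hne).ne'
    ((integral_eq_zero_iff_of_nonneg hv0 hint).1 hzero)

/-- The graph `{(x, f x u) | x ∈ X, u ∈ U}` of the set-valued map `x ↦ f(x, U)` on `X`, through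
which the control system is regarded as a differential inclusion. -/
def controlGraph {α β γ : Type*} (X : Set α) (U : Set β) (f : α → β → γ) : SetRel α γ :=
  (fun p : α × β => (p.1, f p.1 p.2)) '' X ×ˢ U

variable {n m : ℕ} {X : Set (EuclideanSpace ℝ (Fin n))} {U : Set (EuclideanSpace ℝ (Fin m))}
  {f : EuclideanSpace ℝ (Fin n) → EuclideanSpace ℝ (Fin m) → EuclideanSpace ℝ (Fin n)}

theorem LiouvilleC.eq_zero_of_isSmoothSubsolution {β : ℝ} {v : EuclideanSpace ℝ (Fin n) → ℝ}
    {μ₀ : Measure (EuclideanSpace ℝ (Fin n))}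
    {μ : Measure (EuclideanSpace ℝ (Fin n) × EuclideanSpace ℝ (Fin m))}
    [IsFiniteMeasure μ₀] [IsFiniteMeasure μ] (hμ : LiouvilleC f β μ₀ μ)
    (hX : IsCompact X) (hU : IsCompact U)
    (hf : ContinuousOn (fun p : EuclideanSpace ℝ (Fin n) × EuclideanSpace ℝ (Fin m) => f p.1 p.2)
      (X ×ˢ U))
    (hsupp : msupport μ ⊆ X ×ˢ U) (hv : IsSmoothSubsolution (controlGraph X U f) β v)
    {x : EuclideanSpace ℝ (Fin n)} (hx : x ∈ msupport μ₀) : v x = 0 := by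
  have hae : ∀ᵐ p ∂μ, p ∈ X ×ˢ U :=
    mem_of_superset Measure.support_mem_ae (msupport_eq_support μ ▸ hsupp)
  have hint {g : EuclideanSpace ℝ (Fin n) × EuclideanSpace ℝ (Fin m) → ℝ}
      (hg : ContinuousOn g (X ×ˢ U)) : Integrable g μ := by
    simpa only [IntegrableOn, Measure.restrict_eq_self_of_ae_mem hae] using
      hg.integrableOn_compact (μ := μ) (hX.prod hU)
  have hcont : Continuous v := hv.contDiff.continuous
  have hint₀ : Integrable v μ₀ :=
    .of_mem_Icc 0 1 hcont.aemeasurable (Eventually.of_forall hv.mem_Icc)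
  have hv0 : 0 ≤ v := fun x => (hv.mem_Icc x).1
  have hle : β * ∫ p, v p.1 ∂μ ≤ ∫ p, fderiv ℝ v p.1 (f p.1 p.2) ∂μ := by
    rw [← integral_const_mul]
    refine integral_mono_ae ((hint (by fun_prop)).const_mul β) (hint ?_) ?_
    · exact ((hv.contDiff.continuous_fderiv one_ne_zero).comp continuous_fst).continuousOn.clm_apply
        hf
    · filter_upwards [hae] with p hp using hv.mul_le_fderiv (mem_image_of_mem _ hp)
  refine eq_zero_of_integral_eq_zero_of_mem_msupport hcont hv0 hint₀ ?_ hx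
  exact le_antisymm (by linarith [hμ v hv.contDiff]) (integral_nonneg hv0)

end Duality

section InvariantSets

variable {n m : ℕ} {X : Set (EuclideanSpace ℝ (Fin n))} {U : Set (EuclideanSpace ℝ (Fin m))}
  {f : EuclideanSpace ℝ (Fin n) → EuclideanSpace ℝ (Fin m) → EuclideanSpace ℝ (Fin n)}

theorem mem_mciC_of_lipschitzWith {C : ℝ≥0} {x : ℝ → EuclideanSpace ℝ (Fin n)}
    (hx : LipschitzWith C x) (hdom : ∀ t ≥ 0, x t ∈ (controlGraph X U f).dom)
    (hderiv : ∀ᵐ t ∂volume.restrict (Ici 0),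
      deriv x t ∈ convexHull ℝ ((controlGraph X U f).image {x t})) :
    x 0 ∈ mciC X U f := by
  refine ⟨x, ⟨fun t ht => ?_, deriv x, fun t _ => ?_, fun t _ => ?_, ?_⟩, rfl⟩
  · obtain ⟨_, p, hp, hpx⟩ := hdom t ht
    exact (Prod.mk.inj hpx).1 ▸ hp.1
  · exact (integral_deriv_eq_sub_of_lipschitzWith hx 0 t).1
  · rw [(integral_deriv_eq_sub_of_lipschitzWith hx 0 t).2, add_sub_cancel]
  · filter_upwards [hderiv] with t ht
    refine convexHull_mono ?_ ht
    rintro _ ⟨_, rfl, p, hp, hpw⟩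
    obtain ⟨hpx, rfl⟩ := Prod.mk.inj hpw
    exact ⟨p.2, hp.2, by rw [hpx]⟩

theorem LiouvilleC.msupport_subset_mciC {β : ℝ} (hβ : 0 < β)
    {μ₀ : Measure (EuclideanSpace ℝ (Fin n))}
    {μ : Measure (EuclideanSpace ℝ (Fin n) × EuclideanSpace ℝ (Fin m))}
    [IsFiniteMeasure μ₀] [IsFiniteMeasure μ] (hμ : LiouvilleC f β μ₀ μ)
    (hX : IsCompact X) (hU : IsCompact U)
    (hf : ContinuousOn (fun p : EuclideanSpace ℝ (Fin n) × EuclideanSpace ℝ (Fin m) => f p.1 p.2)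
      (X ×ˢ U))
    (hsupp : msupport μ ⊆ X ×ˢ U) : msupport μ₀ ⊆ mciC X U f := by
  intro x₀ hx₀
  have hpolygon : ∀ ε > 0, ∀ k : ℝ, ∃ T ≥ k, HasEulerPolygon (controlGraph X U f) ε T x₀ := by
    intro ε hε
    obtain ⟨v, hv, hvpolygon⟩ := exists_isSmoothSubsolution (controlGraph X U f) hβ hε
    exact hvpolygon x₀ (hμ.eq_zero_of_isSmoothSubsolution hX hU hf hsupp hv hx₀)
  have hgraph : IsCompact (controlGraph X U f) :=
    (hX.prod hU).image_of_continuousOn (continuousOn_fst.prodMk hf)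
  obtain ⟨C, x, hx, rfl, hdom, hderiv⟩ := exists_lipschitzWith_solution hgraph hpolygon
  exact mem_mciC_of_lipschitzWith hx hdom hderiv

end InvariantSets

theorem volume_support_initial_le_volume_MCI {n m : ℕ}
    (X : Set (EuclideanSpace ℝ (Fin n))) (U : Set (EuclideanSpace ℝ (Fin m)))
    (hX : IsCompact X) (hU : IsCompact U)
    (f : EuclideanSpace ℝ (Fin n) → EuclideanSpace ℝ (Fin m) → EuclideanSpace ℝ (Fin n))
    (hf : Continuous fun p : EuclideanSpace ℝ (Fin n) × EuclideanSpace ℝ (Fin m) => f p.1 p.2)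
    (β : ℝ) (hβ : 0 < β)
    (μ₀ : Measure (EuclideanSpace ℝ (Fin n)))
    (μ : Measure (EuclideanSpace ℝ (Fin n) × EuclideanSpace ℝ (Fin m)))
    [IsFiniteMeasure μ₀] [IsFiniteMeasure μ]
    (hsupp₀ : msupport μ₀ ⊆ X) (hsupp : msupport μ ⊆ X ×ˢ U)
    (hLiouville : LiouvilleC f β μ₀ μ) :
    volume (msupport μ₀) ≤ volume (mciC X U f) := by
  exact measure_mono (hLiouville.msupport_subset_mciC hβ hX hU hf.continuousOn hsupp)
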